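/- Let n ≥ 3 and let f ∈ Aut(F_n). Assume: (1) IA_n ⊆ N(f); (2) Γ_n(2) ⊆ ρ(N(f)). If f̄ ≡ I (mod 2), then N(f) = ρ⁻¹(Γ_n(2)) when det(f̄) = 1, and N(f) = ρ⁻¹(GΓ_n(2)) when det(f̄) = −1 (equivalently, in each case there is a short exact sequence 1 → IA_n → N(f) → Γ_n(2) → 1, respectively 1 → IA_n → N(f) → GΓ_n(2) → 1). If f̄ ≢ I (mod 2), then N(f) = SAut(F_n) when det(f̄) = 1 and N(f) = Aut(F_n) when det(f̄) = −1. -/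

import Mathlib

open Matrix

namespace NormalClosurePaper

/-- The automorphism group of the free group on `n` generators. -/
abbrev FrAut (n : ℕ) := MulAut (FreeGroup (Fin n))

/-- Exponent sum of the generator `x_i` in a word of the free group. -/
def expSum {n : ℕ} (i : Fin n) : FreeGroup (Fin n) →* Multiplicative ℤ :=
  FreeGroup.lift fun j => Multiplicative.ofAdd (if j = i then (1 : ℤ) else 0)

/-- The abelianized matrix of an automorphism of the free group:
the `(i, j)` entry is the exponent sum of `x_i` in `f x_j`. -/
def mat {n : ℕ} (f : FrAut n) : Matrix (Fin n) (Fin n) ℤ :=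
  Matrix.of fun i j => (expSum i (f (FreeGroup.of j))).toAdd

lemma expSum_apply {n : ℕ} (f : FrAut n) (i : Fin n) (w : FreeGroup (Fin n)) :
    (expSum i (f w)).toAdd = ∑ k, mat f i k * (expSum k w).toAdd := by
  induction w using FreeGroup.induction_on with
  | C1 => simp
  | of j =>
      have h : (expSum i (f (FreeGroup.of j))).toAdd = mat f i j := rfl
      rw [h]
      simp [expSum, mul_ite, Finset.sum_ite_eq]
  | inv_of j ih =>
      simp only [_root_.map_inv, toAdd_inv, mul_neg, Finset.sum_neg_distrib, ih]
  | mul x y ihx ihy =>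
      simp only [_root_.map_mul, toAdd_mul, mul_add, Finset.sum_add_distrib, ihx, ihy]

lemma mat_one {n : ℕ} : mat (1 : FrAut n) = 1 := by
  ext i j
  simp [mat, expSum, Matrix.one_apply, eq_comm]

lemma mat_mul {n : ℕ} (f g : FrAut n) : mat (f * g) = mat f * mat g := by
  ext i j
  rw [Matrix.mul_apply]
  show (expSum i ((f * g) (FreeGroup.of j))).toAdd = _
  rw [show (f * g) (FreeGroup.of j) = f (g (FreeGroup.of j)) from rfl, expSum_apply]
  rfl

/-- The matrix of the induced map on the abelianization, as a monoid homomorphism. -/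
def matHom (n : ℕ) : FrAut n →* Matrix (Fin n) (Fin n) ℤ where
  toFun := mat
  map_one' := mat_one
  map_mul' := mat_mul

/-- The homomorphism `Aut(F_n) → GL_n(ℤ)` induced by abelianization. -/
def ρ (n : ℕ) : FrAut n →* GL (Fin n) ℤ := (matHom n).toHomUnits

/-- The composition of `ρ` with the determinant. -/
def detρ (n : ℕ) : FrAut n →* ℤˣ := (Matrix.GeneralLinearGroup.det).comp (ρ n)

/-- The special automorphism group `SAut(F_n)`: automorphisms whose induced matrix
has determinant `1`. -/
def SAut (n : ℕ) : Subgroup (FrAut n) := (detρ n).ker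

/-- The Torelli subgroup `IA_n`, the kernel of `ρ`. -/
def IA (n : ℕ) : Subgroup (FrAut n) := (ρ n).ker

/-- The group of inner automorphisms of the free group. -/
def Inn (n : ℕ) : Subgroup (FrAut n) := (MulAut.conj (G := FreeGroup (Fin n))).range

instance Inn_normal (n : ℕ) : (Inn n).Normal := by
  constructor
  rintro - ⟨a, rfl⟩ g
  refine ⟨g a, ?_⟩
  ext y
  simp [MulAut.conj_apply, MulAut.mul_apply, _root_.map_mul, _root_.map_inv]

/-- The outer automorphism group `Out(F_n)`. -/
abbrev OutF (n : ℕ) := FrAut n ⧸ Inn n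

/-- The projection `Aut(F_n) → Out(F_n)`. -/
def toOut (n : ℕ) : FrAut n →* OutF n := QuotientGroup.mk' (Inn n)

lemma mat_conj {n : ℕ} (g : FreeGroup (Fin n)) : mat (MulAut.conj g) = 1 := by
  rw [← mat_one (n := n)]
  ext i j
  simp only [mat, Matrix.of_apply, MulAut.conj_apply, MulAut.one_apply, _root_.map_mul,
    _root_.map_inv, toAdd_mul, toAdd_inv]
  omega

lemma ρ_conj {n : ℕ} (g : FreeGroup (Fin n)) : ρ n (MulAut.conj g) = 1 :=
  Units.ext (mat_conj g)

/-- The homomorphism `Out(F_n) → GL_n(ℤ)` induced by abelianization. -/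
def ρOut (n : ℕ) : OutF n →* GL (Fin n) ℤ :=
  QuotientGroup.lift (Inn n) (ρ n) (by rintro - ⟨g, rfl⟩; exact ρ_conj g)

/-- The composition of `ρOut` with the determinant. -/
def detρOut (n : ℕ) : OutF n →* ℤˣ := (Matrix.GeneralLinearGroup.det).comp (ρOut n)

/-- The special outer automorphism group `SOut(F_n)`. -/
def SOut (n : ℕ) : Subgroup (OutF n) := (detρOut n).ker

/-- Entrywise reduction `GL_n(ℤ) → GL_n(ℤ/ℓℤ)`. -/
def redGL (n ℓ : ℕ) : GL (Fin n) ℤ →* GL (Fin n) (ZMod ℓ) :=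
  Units.map (RingHom.mapMatrix (Int.castRingHom (ZMod ℓ))).toMonoidHom

/-- The subgroup `GΓ_n(ℓ)` of `GL_n(ℤ)` of matrices congruent to the identity mod `ℓ`. -/
def GGamma (n ℓ : ℕ) : Subgroup (GL (Fin n) ℤ) := (redGL n ℓ).ker

/-- The level `ℓ` congruence subgroup `Γ_n(ℓ)` (viewed inside `GL_n(ℤ)`): matrices with
determinant `1` that are congruent to the identity mod `ℓ`. -/
def GammaGL (n ℓ : ℕ) : Subgroup (GL (Fin n) ℤ) :=
  GGamma n ℓ ⊓ (Matrix.GeneralLinearGroup.det).ker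

/-- Reduction `SL_n(ℤ) → SL_n(ℤ/ℓℤ)`. -/
def redSL (n ℓ : ℕ) : Matrix.SpecialLinearGroup (Fin n) ℤ →*
    Matrix.SpecialLinearGroup (Fin n) (ZMod ℓ) :=
  Matrix.SpecialLinearGroup.map (Int.castRingHom (ZMod ℓ))

/-- Projection `SL_n(ℤ/ℓℤ) → PSL_n(ℤ/ℓℤ)`. -/
def projPSL (n ℓ : ℕ) : Matrix.SpecialLinearGroup (Fin n) (ZMod ℓ) →*
    Matrix.ProjectiveSpecialLinearGroup (Fin n) (ZMod ℓ) :=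
  QuotientGroup.mk' _

/-!
Let `q : Aut(F_n) → SL_n(ℤ/2ℤ)` be the action on the abelianization modulo two; it is onto, since
Nielsen automorphisms map to transvections. For `n ≥ 3` the group `SL_n(ℤ/2ℤ)` is perfect, because
`t_ij(ab) = [t_ik(a), t_kj(b)]`, and simple, by the Iwasawa criterion for its action on the
projective space, with the transvections along a line as the abelian subgroups.

Let `N = N(f)`. If `q(f) ≠ 1`, then `q(N)` is a nontrivial normal subgroup, hence everything, and by
perfectness so is `q([N, N])`. As `[N, N]` consists of automorphisms of determinant `1`, already
`N ∩ SAut(F_n)` maps onto `SL_n(ℤ/2ℤ)`. The kernel of `q` on `SAut(F_n)` is `ρ⁻¹(Γ_n(2))`, which the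
hypotheses put inside `N`, so `SAut(F_n) ≤ N`. An element of determinant `-1` in `N` accounts for
the passage from determinant `1` to determinant `±1`.
-/

section SpecialLinearGroup

open Matrix.SpecialLinearGroup
open scoped commutatorElement LinearAlgebra.Projectivization

variable {ι : Type*} [Fintype ι] [DecidableEq ι]

lemma commutatorElement_transvection {R : Type*} [CommRing R] {i j k : ι} (hik : i ≠ k)
    (hkj : k ≠ j) (hij : i ≠ j) (a b : R) :
    ⁅transvection hik a, transvection hkj b⁆ = transvection hij (a * b) := by
  rw [commutatorElement_def, transvection_inv, transvection_inv]
  refine Subtype.ext ?_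
  simp only [coe_mul, transvection_coe, mul_add, add_mul, mul_one, one_mul,
    mul_neg, neg_mul, ← single_neg, single_mul_single_same, ne_eq, hik.symm, hij.symm, hkj.symm,
    not_false_eq_true, single_mul_single_of_ne, zero_mul]
  abel

variable {F : Type*} [Field F]

lemma diag2n_eq_transvection_mul {i j : ι} (hij : i ≠ j) {a : F} (ha : a ≠ 0) :
    diag2n hij a ha =
      transvection hij a * transvection hij.symm (-a⁻¹) * transvection hij a *
        (transvection hij (-1) * transvection hij.symm 1 * transvection hij (-1)) := by
  have diag2n_eq_add_single :
      (diag2n hij a ha : Matrix ι ι F) = 1 + single i i (a - 1) + single j j (a⁻¹ - 1) := by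
    ext k l
    simp only [diag2n_coe, diagonal_apply, Matrix.add_apply, one_apply, single_apply]
    grind
  refine Subtype.ext <| diag2n_eq_add_single.trans ?_
  simp only [coe_mul, transvection_coe, mul_add, add_mul, mul_one, one_mul,
    mul_neg, neg_mul, sub_eq_add_neg, single_add, ← single_neg, single_mul_single_same,
    mul_inv_cancel₀ ha, inv_mul_cancel₀ ha, ne_eq, hij, hij.symm, not_false_eq_true,
    single_mul_single_of_ne, zero_mul, mul_zero, neg_zero]
  abel

lemma eq_top_of_transvection_mem {H : Subgroup (Matrix.SpecialLinearGroup ι F)}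
    (hH : ∀ (i j : ι) (hij : i ≠ j) (c : F), transvection hij c ∈ H) : H = ⊤ := by
  refine H.eq_top_iff'.2 fun A ↦ ?_
  cases subsingleton_or_nontrivial ι
  · exact Subsingleton.elim 1 A ▸ H.one_mem
  refine diagonal_transvection_induction' (· ∈ H) A (fun i j hij c hc ↦ ?_) hH fun _ _ ↦ H.mul_mem
  have weyl_mem (c d : F) :
      transvection hij c * transvection hij.symm d * transvection hij c ∈ H :=
    H.mul_mem (H.mul_mem (hH ..) (hH ..)) (hH ..)
  rw [diag2n_eq_transvection_mul hij hc]
  exact H.mul_mem (weyl_mem c (-c⁻¹)) (weyl_mem (-1) 1)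

lemma isPerfect_specialLinearGroup (hι : 3 ≤ Fintype.card ι) :
    Group.IsPerfect (Matrix.SpecialLinearGroup ι F) := by
  refine ⟨eq_top_of_transvection_mem fun i j hij c ↦ ?_⟩
  obtain ⟨k, hki, hkj⟩ := ENat.exists_ne_ne_of_three_le (by simpa using mod_cast hι) i j
  rw [← mul_one c, ← commutatorElement_transvection hki.symm hkj hij]
  exact Subgroup.commutator_mem_commutator (Subgroup.mem_top _) (Subgroup.mem_top _)

lemma iSup_lineStab_eq_top :
    ⨆ p : ℙ F (ι → F), lineStab p.submodule = ⊤ := by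
  refine eq_top_of_transvection_mem fun i j hij c ↦ ?_
  have single_ne_zero : (Pi.single i 1 : ι → F) ≠ 0 := Pi.single_ne_zero_iff.2 one_ne_zero
  refine Subgroup.mem_iSup_of_mem (.mk F _ single_ne_zero) ?_
  rw [Projectivization.submodule_mk]
  exact SL2Gen.transvection_mem_lineStab hij c

/-- The Iwasawa structure of `SL(ι, F)` acting on the projective space of `ι → F`: to a line it
attaches the group of transvections along that line. -/
def iwasawaStructure :
    MulAction.IwasawaStructure (Matrix.SpecialLinearGroup ι F) (ℙ F (ι → F)) where
  T p := lineStab p.submodule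
  is_comm p := by
    rw [← p.mk_rep, Projectivization.submodule_mk]
    exact lineStab_isMulCommutative_of_span p.rep p.rep_nonzero
  is_conj g p := by rw [PSL.smul_submodule, lineStab_smul]
  is_generator := iSup_lineStab_eq_top

lemma le_center_or_eq_top_of_normal [Group.IsPerfect (Matrix.SpecialLinearGroup ι F)]
    (N : Subgroup (Matrix.SpecialLinearGroup ι F)) [N.Normal] :
    N ≤ Subgroup.center (Matrix.SpecialLinearGroup ι F) ∨ N = ⊤ := by
  by_cases hN : MulAction.fixedPoints N (ℙ F (ι → F)) = .univ
  · left
    rw [← Projectivization.SL_mulAction_ker]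
    intro g hg
    ext1 p
    exact Set.eq_univ_iff_forall.1 hN p ⟨g, hg⟩
  · right
    rw [eq_top_iff, ← Group.IsPerfect.commutator_eq_top]
    exact iwasawaStructure.commutator_le N hN

variable {R : Type*} [CommRing R] [Subsingleton Rˣ]

lemma center_specialLinearGroup_eq_bot : Subgroup.center (Matrix.SpecialLinearGroup ι R) = ⊥ := by
  have := (center_equiv_rootsOfUnity (n := ι) (R := R)).subsingleton
  exact Subgroup.eq_bot_of_subsingleton _

lemma isSimpleGroup_specialLinearGroup [Subsingleton Fˣ] (hι : 3 ≤ Fintype.card ι) :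
    IsSimpleGroup (Matrix.SpecialLinearGroup ι F) where
  exists_pair_ne := by
    have : Nontrivial ι := Fintype.one_lt_card_iff_nontrivial.1 (by lia)
    obtain ⟨i, j, hij⟩ := exists_pair_ne ι
    refine ⟨transvection hij 1, 1, fun h ↦ ?_⟩
    simpa [transvection_coe, hij] using congr_fun₂ (congrArg Subtype.val h) i j
  eq_bot_or_eq_top_of_normal N _ := by
    have := isPerfect_specialLinearGroup (F := F) hι
    simpa [center_specialLinearGroup_eq_bot] using le_center_or_eq_top_of_normal N

/-- Over a ring with a single unit every invertible matrix has determinant `1`, so that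
`SL(ι, R)` is all of `GL(ι, R)`. -/
noncomputable def specialLinearGroupEquivGL : Matrix.SpecialLinearGroup ι R ≃* GL ι R :=
  MulEquiv.ofBijective toGL ⟨toGL_injective, fun A ↦
    ⟨⟨A, congrArg Units.val (Subsingleton.elim (GeneralLinearGroup.det A) 1)⟩, Units.ext rfl⟩⟩

lemma coe_specialLinearGroupEquivGL_symm (A : GL ι R) :
    (specialLinearGroupEquivGL.symm A : Matrix ι ι R) = A :=
  congrArg Units.val (specialLinearGroupEquivGL.apply_symm_apply A)

end SpecialLinearGroup

section Group

open scoped commutatorElement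

variable {G Q : Type*} [Group G] [Group Q] {φ : G →* Q} {N S : Subgroup G}

lemma map_inf_ker_eq_top {A : Type*} [CommGroup A] [Group.IsPerfect Q] (ψ : G →* A)
    (hN : N.map φ = ⊤) : (N ⊓ ψ.ker).map φ = ⊤ := by
  have commutator_le : ⁅N, N⁆ ≤ N ⊓ ψ.ker :=
    le_inf (Subgroup.commutator_le_self N)
      ((Subgroup.commutator_mono le_top le_top).trans (Abelianization.commutator_subset_ker ψ))
  rw [eq_top_iff]
  calc ⊤ = ⁅(⊤ : Subgroup Q), ⊤⁆ := Group.IsPerfect.commutator_eq_top.symm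
    _ = ⁅N, N⁆.map φ := by rw [Subgroup.map_commutator, hN]
    _ ≤ (N ⊓ ψ.ker).map φ := Subgroup.map_mono commutator_le

lemma le_of_map_inf_eq_top (hN : (N ⊓ S).map φ = ⊤) (hS : φ.ker ⊓ S ≤ N) : S ≤ N := by
  intro s hs
  obtain ⟨m, ⟨hmN, hmS⟩, hm⟩ : φ s ∈ (N ⊓ S).map φ := hN ▸ Subgroup.mem_top _
  have hsm : s * m⁻¹ ∈ N :=
    hS ⟨by simp [hm], S.mul_mem hs (S.inv_mem hmS)⟩
  simpa using N.mul_mem hsm hmN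

end Group

section FreeGroup

variable {n : ℕ}

/-- The endomorphism of the free group multiplying the generator `x_j` by `y` on the right and
fixing the other generators. -/
def mulRightHom (j : Fin n) (y : FreeGroup (Fin n)) : FreeGroup (Fin n) →* FreeGroup (Fin n) :=
  FreeGroup.lift fun k ↦ if k = j then FreeGroup.of k * y else FreeGroup.of k

lemma mulRightHom_of (j k : Fin n) (y : FreeGroup (Fin n)) :
    mulRightHom j y (FreeGroup.of k) = if k = j then FreeGroup.of k * y else FreeGroup.of k := by
  simp [mulRightHom]

/-- The Nielsen automorphism `x_j ↦ x_j x_i ^ c`. -/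
def nielsen {i j : Fin n} (hij : i ≠ j) (c : ℤ) : FrAut n :=
  MonoidHom.toMulEquiv (mulRightHom j (FreeGroup.of i ^ c)) (mulRightHom j (FreeGroup.of i ^ (-c)))
    (by ext k; by_cases hk : k = j <;> simp [mulRightHom_of, hk, hij])
    (by ext k; by_cases hk : k = j <;> simp [mulRightHom_of, hk, hij])

lemma mat_nielsen {i j : Fin n} (hij : i ≠ j) (c : ℤ) :
    mat (nielsen hij c) = Matrix.transvection i j c := by
  ext k l
  by_cases hl : l = j
  · simp [mat, nielsen, mulRightHom_of, transvection, expSum, one_apply, single_apply, hl, eq_comm]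
  · simp [mat, nielsen, mulRightHom_of, transvection, expSum, one_apply, Ne.symm hl, eq_comm]

/-- The action of `Aut(F_n)` on the abelianization modulo two, as a map to `SL_n(ℤ/2ℤ)`. -/
noncomputable def modTwo (n : ℕ) : FrAut n →* Matrix.SpecialLinearGroup (Fin n) (ZMod 2) :=
  specialLinearGroupEquivGL.symm.toMonoidHom.comp ((redGL n 2).comp (ρ n))

lemma coe_modTwo (g : FrAut n) :
    (modTwo n g : Matrix (Fin n) (Fin n) (ZMod 2)) = (mat g).map Int.cast :=
  coe_specialLinearGroupEquivGL_symm _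

lemma ker_modTwo : (modTwo n).ker = (GGamma n 2).comap (ρ n) := by
  ext g
  simp [modTwo, GGamma, MonoidHom.mem_ker]

lemma modTwo_surjective : Function.Surjective (modTwo n) := by
  refine MonoidHom.range_eq_top.1 (eq_top_of_transvection_mem fun i j hij c ↦ ?_)
  obtain ⟨c, rfl⟩ := ZMod.intCast_surjective c
  refine ⟨nielsen hij c, Subtype.ext ?_⟩
  rw [coe_modTwo, mat_nielsen, Matrix.SpecialLinearGroup.transvection_coe]
  simpa [transvection, Matrix.map_add, Matrix.map_one] using
    map_single i j c (Int.castRingHom (ZMod 2))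

lemma ker_modTwo_inf_SAut : (modTwo n).ker ⊓ SAut n = (GammaGL n 2).comap (ρ n) := by
  rw [ker_modTwo, GammaGL, Subgroup.comap_inf]
  rfl

lemma SAut_le_of_not_le_ker_modTwo (hn : 3 ≤ n) {N : Subgroup (FrAut n)} [N.Normal]
    (hΓ : (GammaGL n 2).comap (ρ n) ≤ N) (hN : ¬ N ≤ (modTwo n).ker) : SAut n ≤ N := by
  have : IsSimpleGroup (Matrix.SpecialLinearGroup (Fin n) (ZMod 2)) :=
    isSimpleGroup_specialLinearGroup (by simpa)
  have : Group.IsPerfect (Matrix.SpecialLinearGroup (Fin n) (ZMod 2)) :=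
    isPerfect_specialLinearGroup (by simpa)
  have normal_map : (N.map (modTwo n)).Normal :=
    Subgroup.Normal.map ‹_› _ modTwo_surjective
  have map_eq_top : N.map (modTwo n) = ⊤ :=
    normal_map.eq_bot_or_eq_top.resolve_left (by rwa [Subgroup.map_eq_bot_iff])
  exact le_of_map_inf_eq_top (map_inf_ker_eq_top (detρ n) map_eq_top)
    (ker_modTwo_inf_SAut.trans_le hΓ)

lemma le_of_detρ_eq_neg_one {N S : Subgroup (FrAut n)} {f : FrAut n} (hfN : f ∈ N) (hfS : f ∈ S)
    (hf : detρ n f = -1) (hS : SAut n ⊓ S ≤ N) : S ≤ N := by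
  refine le_of_map_inf_eq_top (φ := detρ n) (top_le_iff.1 fun u _ ↦ ?_) hS
  rcases Int.units_eq_one_or u with rfl | rfl
  · exact one_mem _
  · exact ⟨f, ⟨hfN, hfS⟩, hf⟩

end FreeGroup

/-- **Lemma 5.1 (level 2).** For `n ≥ 3` and `f ∈ Aut(F_n)` with `IA_n ⊆ N(f)` and
`Γ_n(2) ⊆ ρ(N(f))`: if `f̄ ≡ I (mod 2)` then `N(f) = ρ⁻¹(Γ_n(2))` when `det f̄ = 1` and
`N(f) = ρ⁻¹(GΓ_n(2))` when `det f̄ = -1`; if `f̄ ≢ I (mod 2)` then `N(f) = SAut(F_n)`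
when `det f̄ = 1` and `N(f) = Aut(F_n)` when `det f̄ = -1`. -/
theorem normalClosure_of_level_two (n : ℕ) (hn : 3 ≤ n) (f : FrAut n)
    (h1 : IA n ≤ Subgroup.normalClosure {f})
    (h2 : GammaGL n 2 ≤ (Subgroup.normalClosure {f}).map (ρ n)) :
    (ρ n f ∈ GGamma n 2 →
      (detρ n f = 1 →
        Subgroup.normalClosure {f} = Subgroup.comap (ρ n) (GammaGL n 2)) ∧
      (detρ n f = -1 →
        Subgroup.normalClosure {f} = Subgroup.comap (ρ n) (GGamma n 2))) ∧
    (ρ n f ∉ GGamma n 2 →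
      (detρ n f = 1 → Subgroup.normalClosure {f} = SAut n) ∧
      (detρ n f = -1 → Subgroup.normalClosure {f} = ⊤)) := by
  have hf : f ∈ Subgroup.normalClosure {f} := Subgroup.subset_normalClosure rfl
  have hΓ : (GammaGL n 2).comap (ρ n) ≤ Subgroup.normalClosure {f} :=
    (Subgroup.comap_mono h2).trans (Subgroup.comap_map_eq_self h1).le
  have normalClosure_le {S : Subgroup (FrAut n)} [S.Normal] (hS : f ∈ S) :
      Subgroup.normalClosure {f} ≤ S :=
    Subgroup.normalClosure_le_normal (Set.singleton_subset_iff.2 hS)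
  rw [← ker_modTwo_inf_SAut] at hΓ ⊢
  rw [← Subgroup.mem_comap, ← ker_modTwo]
  have : (SAut n).Normal := MonoidHom.normal_ker _
  refine ⟨fun hf2 ↦ ⟨fun hdet ↦ ?_, fun hdet ↦ ?_⟩, fun hf2 ↦ ?_⟩
  · exact (normalClosure_le (Subgroup.mem_inf.2 ⟨hf2, hdet⟩)).antisymm hΓ
  · exact (normalClosure_le hf2).antisymm
      (le_of_detρ_eq_neg_one hf hf2 hdet (by rwa [inf_comm]))
  · have hSAut : SAut n ≤ Subgroup.normalClosure {f} :=
      SAut_le_of_not_le_ker_modTwo hn (by rwa [← ker_modTwo_inf_SAut]) fun h ↦ hf2 (h hf)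
    refine ⟨fun hdet ↦ (normalClosure_le hdet).antisymm hSAut, fun hdet ↦ ?_⟩
    exact top_le_iff.1 (le_of_detρ_eq_neg_one hf (Subgroup.mem_top f) hdet (by rwa [inf_top_eq]))

end NormalClosurePaper
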